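/- Let X_δ = {t ∈ ℒ : ||t||_∞ ≥ δ} for δ > 0. Then there exists a constant Γ = Γ(ω,ν,r,R) > 0, depending only on ω, ν, r, R, such that ∫_{X_δ} e^{−q(t)} dt ≤ νk·exp(−δ²k^{ν−1}/Γ)·∫_ℒ e^{−q(t)} dt, where dt denotes Lebesgue measure on ℒ. -/

import Mathlib

open MeasureTheory Real InnerProductSpace

noncomputable section

variable {ν : ℕ}

/-- The coordinate index set of `ℝ^d`, `d = k_1 + ⋯ + k_ν`. -/
abbrev Idx (kk : Fin ν → ℕ) : Type := Σ j : Fin ν, Fin (kk j)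

/-- The multi-index set, of cardinality `n = k_1 ⋯ k_ν`. -/
abbrev MIdx (kk : Fin ν → ℕ) : Type := ∀ j : Fin ν, Fin (kk j)

/-- The ambient Euclidean space `ℝ^d`. -/
abbrev Spc (kk : Fin ν → ℕ) : Type := EuclideanSpace ℝ (Idx kk)

/-- The coordinate functional `t ↦ τ_{j,i}`. -/
def coordL (kk : Fin ν → ℕ) (p : Idx kk) : Spc kk →ₗ[ℝ] ℝ where
  toFun t := t p
  map_add' _ _ := rfl
  map_smul' _ _ := rfl

/-- The linear functional `t ↦ ⟨a_m, t⟩ = τ_{1,m_1} + ⋯ + τ_{ν,m_ν}`. -/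
def linF (kk : Fin ν → ℕ) (m : MIdx kk) : Spc kk →ₗ[ℝ] ℝ :=
  ∑ j : Fin ν, coordL kk ⟨j, m j⟩

/-- The column `a_m` of the constraint matrix `A`. -/
def colA (kk : Fin ν → ℕ) (m : MIdx kk) : Spc kk :=
  (WithLp.equiv 2 (Idx kk → ℝ)).symm (fun p => if p.2 = m p.1 then 1 else 0)

/-- The quadratic form `q(t) = (1/2) ∑_m α_m (τ_{1,m_1} + ⋯ + τ_{ν,m_ν})²`. -/
def qform (kk : Fin ν → ℕ) (α : MIdx kk → ℝ) (t : Spc kk) : ℝ :=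
  (1/2) * ∑ m : MIdx kk, α m * (linF kk m t)^2

/-- The symmetric positive semidefinite matrix `B` with `q(t) = (1/2)⟨t, Bt⟩`,
given explicitly as `B = ∑_m α_m a_m a_mᵀ`. -/
def Bmat (kk : Fin ν → ℕ) (α : MIdx kk → ℝ) : Spc kk →ₗ[ℝ] Spc kk :=
  ∑ m : MIdx kk, α m • (linF kk m).smulRight (colA kk m)

/-- The sup norm `‖t‖_∞`. -/
def supNorm (kk : Fin ν → ℕ) (t : Spc kk) : ℝ := ‖(WithLp.equiv 2 (Idx kk → ℝ)) t‖

/-- The subspace `ℒ = {t : τ_{j,k_j} = 0 for j = 2,…,ν}`. -/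
def Lsub (kk : Fin ν → ℕ) (hk : ∀ j, 0 < kk j) : Submodule ℝ (Spc kk) :=
  ⨅ (j : {j : Fin ν // (j : ℕ) ≠ 0}),
    LinearMap.ker (coordL kk ⟨j.1, ⟨kk j.1 - 1, Nat.sub_lt (hk j.1) one_pos⟩⟩)

lemma exp_moment {E : Type*} [NormedAddCommGroup E] [InnerProductSpace ℝ E]
    [FiniteDimensional ℝ E] [MeasurableSpace E] [BorelSpace E]
    (B : E →ₗ[ℝ] E →ₗ[ℝ] ℝ) (hsymm : ∀ x y, B x y = B y x) (b : ℝ) (hb : 0 < b)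
    (hB : ∀ t, b * ‖t‖ ^ 2 ≤ B t t) :
    Integrable (fun t : E => Real.exp (-(B t t))) ∧
    ∀ (l : E →ₗ[ℝ] ℝ) (a : ℝ), 0 < a → (∀ t, a * (l t) ^ 2 ≤ B t t) → ∀ s : ℝ,
      Integrable (fun t : E => Real.exp (s * l t - B t t)) ∧
      ∫ t : E, Real.exp (s * l t - B t t) ≤
        Real.exp (s ^ 2 / (4 * a)) * ∫ t : E, Real.exp (-(B t t)) := by
  have hcont : Continuous (fun t : E => B t t) := by
    have h1 : Continuous (fun t : E => LinearMap.toContinuousLinearMap (B t)) :=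
      LinearMap.continuous_of_finiteDimensional
        ((LinearMap.toContinuousLinearMap : (E →ₗ[ℝ] ℝ) ≃ₗ[ℝ] (E →L[ℝ] ℝ)).toLinearMap ∘ₗ B)
    exact h1.clm_apply continuous_id
  have hint : Integrable (fun t : E => Real.exp (-(B t t))) := by
    have h0 := GaussianFourier.integrable_cexp_neg_mul_sq_norm_add (V := E) (b := (b : ℂ))
      (by simpa using hb) 0 0
    have h1 := h0.norm
    refine h1.mono (Real.continuous_exp.comp hcont.neg).aestronglyMeasurable (Filter.Eventually.of_forall fun t => ?_)
    simp only [Real.norm_eq_abs, Complex.norm_exp, abs_of_pos (Real.exp_pos _)]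
    apply Real.exp_le_exp.2
    have := hB t
    have e : ((-(b : ℂ) * (‖t‖ : ℂ) ^ 2 + 0 * ((inner ℝ (0 : E) t : ℝ) : ℂ))).re
        = -(b * ‖t‖ ^ 2) := by
      rw [zero_mul, add_zero]
      norm_cast
      simp
    rw [e]
    linarith
  refine ⟨hint, fun l a ha hl s => ?_⟩
  have hinj : Function.Injective B := by
    rw [← LinearMap.ker_eq_bot, LinearMap.ker_eq_bot']
    intro t ht
    have h := hB t
    rw [ht] at h
    simp only [LinearMap.zero_apply] at h
    have : ‖t‖ ^ 2 ≤ 0 := by nlinarith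
    have : ‖t‖ = 0 := by nlinarith [norm_nonneg t, sq_nonneg ‖t‖, pow_eq_zero_iff (two_ne_zero) |>.1 (le_antisymm this (sq_nonneg _))]
    exact norm_eq_zero.1 this
  have hsurj : Function.Surjective B :=
    (LinearMap.injective_iff_surjective_of_finrank_eq_finrank
      (Subspace.dual_finrank_eq (K := ℝ) (V := E)).symm).1 hinj
  obtain ⟨v, hv⟩ := hsurj ((s / 2) • l)
  have hv' : ∀ t, B v t = s / 2 * l t := fun t => by rw [hv]; simp
  have key : ∀ t, s * l t - B t t = B v v + -(B (t - v) (t - v)) := by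
    intro t
    simp only [map_sub, LinearMap.sub_apply]
    rw [hsymm t v, hv' t]
    ring
  have hfun : (fun t : E => Real.exp (s * l t - B t t)) =
      fun t => Real.exp (B v v) * Real.exp (-(B (t - v) (t - v))) := by
    funext t
    rw [key, Real.exp_add]
  have hvv : B v v ≤ s ^ 2 / (4 * a) := by
    have h1 := hl v
    have h2 := hv' v
    rw [le_div_iff₀ (by positivity)]
    nlinarith [sq_nonneg (2 * a * l v - s)]
  rw [hfun]
  refine ⟨(hint.comp_sub_right v).const_mul _, ?_⟩
  rw [integral_const_mul, integral_sub_right_eq_self (fun t : E => Real.exp (-(B t t))) v]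
  exact mul_le_mul_of_nonneg_right (Real.exp_le_exp.2 hvv)
    (integral_nonneg fun t => (Real.exp_pos _).le)

lemma sum_update_le (kk : Fin ν → ℕ) (g : MIdx kk → ℝ) (hg : ∀ m, 0 ≤ g m)
    (j : Fin ν) (i : Fin (kk j)) :
    ∑ m : MIdx kk, g (Function.update m j i) ≤ kk j * ∑ m : MIdx kk, g m := by
  have h1 : ∑ p : MIdx kk × Fin (kk j), g (Function.update p.1 j p.2)
      = ∑ p : MIdx kk × Fin (kk j), g p.1 := by
    have hinv : Function.Involutive
        (fun p : MIdx kk × Fin (kk j) => (Function.update p.1 j p.2, p.1 j)) := by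
      intro p
      simp
    exact Fintype.sum_equiv hinv.toPerm _ _ (fun p => rfl)
  rw [Fintype.sum_prod_type_right, Fintype.sum_prod_type] at h1
  simp only [Finset.sum_const, Finset.card_univ, Fintype.card_fin, nsmul_eq_mul] at h1
  rw [Finset.mul_sum, ← h1]
  exact Finset.single_le_sum
    (f := fun i => ∑ m : MIdx kk, g (Function.update m j i))
    (fun i _ => Finset.sum_nonneg fun m _ => hg _) (Finset.mem_univ i)

lemma linF_apply (kk : Fin ν → ℕ) (m : MIdx kk) (t : Spc kk) :
    linF kk m t = ∑ j : Fin ν, t ⟨j, m j⟩ := by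
  rw [linF, LinearMap.sum_apply]
  rfl

lemma linF_update (kk : Fin ν → ℕ) (m : MIdx kk) (j : Fin ν) (i : Fin (kk j)) (t : Spc kk) :
    linF kk (Function.update m j i) t =
      t ⟨j, i⟩ + ∑ l ∈ Finset.univ.erase j, t ⟨l, m l⟩ := by
  rw [linF_apply, ← Finset.add_sum_erase _ _ (Finset.mem_univ j)]
  congr 1
  · simp
  · refine Finset.sum_congr rfl fun l hl => ?_
    rw [Function.update_of_ne (Finset.ne_of_mem_erase hl)]

lemma coord_bound (kk : Fin ν → ℕ) (hν : 2 ≤ ν) (hk : ∀ j, 0 < kk j) (w : ℝ) (hw : 0 < w)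
    (hwk : ∀ j, w ≤ kk j) (t : Spc kk) (ht : t ∈ Lsub kk hk) (p : Idx kk) :
    w ^ (ν - 1) * (t p) ^ 2 ≤ (2 + 8 * (ν : ℝ) ^ 2) * ∑ m : MIdx kk, (linF kk m t) ^ 2 := by
  set S := ∑ m : MIdx kk, (linF kk m t) ^ 2 with hS
  have hS0 : 0 ≤ S := Finset.sum_nonneg fun m _ => sq_nonneg _
  set P := w ^ (ν - 1) with hP
  have hP0 : 0 < P := by positivity
  have hcard : (Fintype.card (MIdx kk) : ℝ) = ∏ j, (kk j : ℝ) := by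
    simp [Fintype.card_pi]
  have hM : ∀ j, (kk j : ℝ) * P ≤ Fintype.card (MIdx kk) := by
    intro j
    rw [hcard, ← Finset.mul_prod_erase _ _ (Finset.mem_univ j)]
    refine mul_le_mul_of_nonneg_left ?_ (by positivity)
    have : P = ∏ _l ∈ Finset.univ.erase j, w := by
      rw [Finset.prod_const, Finset.card_erase_of_mem (Finset.mem_univ j)]
      simp [hP]
    rw [this]
    exact Finset.prod_le_prod (fun _ _ => hw.le) (fun l _ => hwk l)
  have hup : ∀ (j : Fin ν) (i : Fin (kk j)),
      ∑ m : MIdx kk, (linF kk (Function.update m j i) t) ^ 2 ≤ kk j * S := fun j i =>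
    sum_update_le kk (fun m => (linF kk m t) ^ 2) (fun m => sq_nonneg _) j i
  have hzero : ∀ j : Fin ν, (j : ℕ) ≠ 0 →
      t ⟨j, ⟨kk j - 1, Nat.sub_lt (hk j) one_pos⟩⟩ = 0 := by
    intro j hj
    rw [Lsub, Submodule.mem_iInf] at ht
    exact ht ⟨j, hj⟩
  have hne : ∀ (j : Fin ν) (i : Fin (kk j)), (j : ℕ) ≠ 0 → P * (t ⟨j, i⟩) ^ 2 ≤ 4 * S := by
    intro j i hj
    set e : Fin (kk j) := ⟨kk j - 1, Nat.sub_lt (hk j) one_pos⟩ with he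
    have h1 : ∑ _m : MIdx kk, (t ⟨j, i⟩) ^ 2 ≤ ∑ m : MIdx kk,
        (2 * (linF kk (Function.update m j i) t) ^ 2 +
          2 * (linF kk (Function.update m j e) t) ^ 2) := by
      refine Finset.sum_le_sum fun m _ => ?_
      rw [linF_update, linF_update, hzero j hj]
      generalize ∑ l ∈ Finset.univ.erase j, t ⟨l, m l⟩ = y
      nlinarith [sq_nonneg (t ⟨j, i⟩ + 2 * y)]
    rw [Finset.sum_add_distrib, ← Finset.mul_sum, ← Finset.mul_sum, Finset.sum_const,
      Finset.card_univ, nsmul_eq_mul] at h1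
    have h2 := hup j i
    have h3 := hup j e
    have h4 := mul_le_mul_of_nonneg_right (hM j) (sq_nonneg (t ⟨j, i⟩))
    have hkj : (0 : ℝ) < kk j := by exact_mod_cast hk j
    have h5 : (kk j : ℝ) * (P * (t ⟨j, i⟩) ^ 2) ≤ kk j * (4 * S) := by linarith
    exact le_of_mul_le_mul_left h5 hkj
  obtain ⟨j, i⟩ := p
  by_cases hj : (j : ℕ) = 0
  · have hpt : ∀ m : MIdx kk, (t ⟨j, i⟩) ^ 2 ≤
        2 * (linF kk (Function.update m j i) t) ^ 2 + 8 * (ν : ℝ) ^ 2 * S / P := by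
      intro m
      rw [linF_update]
      have hy : (∑ l ∈ Finset.univ.erase j, t ⟨l, m l⟩) ^ 2 ≤ (ν : ℝ) * (ν * (4 * S / P)) := by
        have hc : ((Finset.univ.erase j).card : ℝ) ≤ ν := by
          have := Finset.card_le_card (Finset.erase_subset j Finset.univ)
          rw [Finset.card_univ, Fintype.card_fin] at this
          exact_mod_cast this
        have h0 : 0 ≤ 4 * S / P := by positivity
        calc (∑ l ∈ Finset.univ.erase j, t ⟨l, m l⟩) ^ 2
            ≤ ((Finset.univ.erase j).card : ℝ) * ∑ l ∈ Finset.univ.erase j, (t ⟨l, m l⟩) ^ 2 :=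
              sq_sum_le_card_mul_sum_sq
          _ ≤ ((Finset.univ.erase j).card : ℝ) * ∑ l ∈ Finset.univ.erase j, (4 * S / P) := by
              refine mul_le_mul_of_nonneg_left (Finset.sum_le_sum fun l hl => ?_) (by positivity)
              rw [le_div_iff₀ hP0, mul_comm]
              refine hne l (m l) fun h => Finset.ne_of_mem_erase hl (Fin.ext (by omega))
          _ ≤ (ν : ℝ) * (ν * (4 * S / P)) := by
              rw [Finset.sum_const, nsmul_eq_mul]
              gcongr
      have e1 : 8 * (ν : ℝ) ^ 2 * S / P = 2 * ((ν : ℝ) * (ν * (4 * S / P))) := by ring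
      rw [e1]
      generalize ∑ l ∈ Finset.univ.erase j, t ⟨l, m l⟩ = y at hy ⊢
      nlinarith [sq_nonneg (t ⟨j, i⟩ + 2 * y)]
    have h1 := Finset.sum_le_sum fun m (_ : m ∈ (Finset.univ : Finset (MIdx kk))) => hpt m
    rw [Finset.sum_add_distrib, ← Finset.mul_sum, Finset.sum_const, Finset.sum_const,
      Finset.card_univ, nsmul_eq_mul, nsmul_eq_mul] at h1
    have h2 := hup j i
    have hkj : (0 : ℝ) < kk j := by exact_mod_cast hk j
    have hM' := hM j
    set M : ℝ := ((Fintype.card (MIdx kk) : ℕ) : ℝ) with hMdef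
    have hM0 : 0 < M := lt_of_lt_of_le (by positivity) hM'
    have h3 : M * (P * (t ⟨j, i⟩) ^ 2) ≤ M * ((2 + 8 * (ν : ℝ) ^ 2) * S) := by
      calc M * (P * (t ⟨j, i⟩) ^ 2) = P * (M * (t ⟨j, i⟩) ^ 2) := by ring
        _ ≤ P * (2 * (kk j * S) + M * (8 * (ν : ℝ) ^ 2 * S / P)) := by
            gcongr
            linarith
        _ = 2 * (kk j * P) * S + M * (8 * (ν : ℝ) ^ 2 * S) := by
            field_simp
        _ ≤ 2 * M * S + M * (8 * (ν : ℝ) ^ 2 * S) := by gcongr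
        _ = _ := by ring
    exact le_of_mul_le_mul_left h3 hM0
  · refine (hne j i hj).trans (mul_le_mul_of_nonneg_right ?_ hS0)
    have : (2 : ℝ) ≤ ν := by exact_mod_cast hν
    nlinarith

/-- Elementary absorption of the factor 2. -/
lemma absorb (y x : ℝ) (hy : 2 ≤ y) : min 1 (2 * y * Real.exp (-x)) ≤ y * Real.exp (-(x / 2)) := by
  set e := Real.exp (-(x / 2)) with he
  have he0 : 0 < e := Real.exp_pos _
  have : Real.exp (-x) = e * e := by rw [he, ← Real.exp_add]; congr 1; ring
  rw [this]
  by_cases h : e ≤ 1 / 2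
  · refine (min_le_right _ _).trans ?_
    nlinarith [mul_pos (by linarith : 0 < y) he0]
  · refine (min_le_left _ _).trans ?_
    nlinarith

/-- For `X_δ = {t ∈ ℒ : ‖t‖_∞ ≥ δ}`, there exists a constant
`Γ = Γ(ω,ν,r,R) > 0` such that
`∫_{X_δ} e^{−q(t)} dt ≤ νk · exp(−δ²k^{ν−1}/Γ) · ∫_ℒ e^{−q(t)} dt`. -/
theorem statement5 (ν : ℕ) (hν : 2 ≤ ν) (ω r R : ℝ)
    (hω0 : 0 < ω) (hω1 : ω ≤ 1) (hr : 0 < r) (hrR : r ≤ R) :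
    ∃ Γ : ℝ, 0 < Γ ∧
      ∀ (kk : Fin ν → ℕ) (hkk : ∀ j, 2 ≤ kk j) (hk : ∀ j, 0 < kk j) (k : ℝ),
        1 ≤ ω * k → (∀ j, ω * k ≤ kk j) → (∀ j, (kk j : ℝ) ≤ k) →
        ∀ (α : MIdx kk → ℝ), (∀ m, r ≤ α m) → (∀ m, α m ≤ R) →
        ∀ δ : ℝ, 0 < δ →
          (∫ t in {t : ↥(Lsub kk hk) | δ ≤ supNorm kk (t : Spc kk)},
              Real.exp (-(qform kk α (t : Spc kk))))
            ≤ (ν : ℝ) * k * Real.exp (-(δ^2 * k ^ (ν - 1) / Γ)) *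
              ∫ t : ↥(Lsub kk hk), Real.exp (-(qform kk α (t : Spc kk))) := by
  have hν' : (2 : ℝ) ≤ ν := by exact_mod_cast hν
  set D : ℝ := 2 + 8 * (ν : ℝ) ^ 2 with hD
  have hD0 : 0 < D := by positivity
  set c : ℝ := r * ω ^ (ν - 1) / (2 * D) with hc
  have hc0 : 0 < c := by positivity
  refine ⟨2 / c, by positivity, ?_⟩
  intro kk hkk hk k hωk hlow hup α hαr hαR δ hδ
  have hk2 : 2 ≤ k := by
    have h1 := hup ⟨0, by omega⟩
    have h2 : (2 : ℝ) ≤ kk ⟨0, by omega⟩ := by exact_mod_cast hkk ⟨0, by omega⟩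
    linarith
  set a : ℝ := c * k ^ (ν - 1) with ha
  have ha0 : 0 < a := by positivity
  have hq : ∀ (t : Lsub kk hk) (p : Idx kk), a * ((t : Spc kk) p) ^ 2 ≤ qform kk α t := by
    intro t p
    have h1 := coord_bound kk hν hk (ω * k) (by linarith) hlow t t.2 p
    have h2 : r * ∑ m : MIdx kk, (linF kk m (t : Spc kk)) ^ 2 ≤
        ∑ m : MIdx kk, α m * (linF kk m (t : Spc kk)) ^ 2 := by
      rw [Finset.mul_sum]
      exact Finset.sum_le_sum fun m _ => mul_le_mul_of_nonneg_right (hαr m) (sq_nonneg _)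
    rw [mul_pow] at h1
    have h3 : a * ((t : Spc kk) p) ^ 2 =
        r / (2 * D) * (ω ^ (ν - 1) * k ^ (ν - 1) * ((t : Spc kk) p) ^ 2) := by
      rw [ha, hc]; ring
    rw [h3]
    refine (mul_le_mul_of_nonneg_left h1 (by positivity)).trans ?_
    rw [qform]
    have h4 : ∀ S : ℝ, r / (2 * D) * (D * S) = 1 / 2 * (r * S) := by
      intro S; field_simp
    rw [h4]
    linarith
  let f : MIdx kk → (Lsub kk hk →ₗ[ℝ] ℝ) := fun m => (linF kk m) ∘ₗ (Lsub kk hk).subtype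
  let B : Lsub kk hk →ₗ[ℝ] Lsub kk hk →ₗ[ℝ] ℝ := ∑ m, (α m / 2) • (f m).smulRight (f m)
  have hBapp : ∀ x y, B x y = ∑ m, α m / 2 * (f m x * f m y) := by
    intro x y
    simp [B, LinearMap.sum_apply]
  have hBq : ∀ t : Lsub kk hk, B t t = qform kk α t := by
    intro t
    rw [hBapp, qform, Finset.mul_sum]
    refine Finset.sum_congr rfl fun m _ => ?_
    simp only [f, LinearMap.comp_apply, Submodule.subtype_apply]
    ring
  let i0 : Idx kk := ⟨⟨0, by omega⟩, ⟨0, hk _⟩⟩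
  have hN0 : (0 : ℝ) < Fintype.card (Idx kk) := by
    exact_mod_cast Fintype.card_pos_iff.2 ⟨i0⟩
  have hNle : (Fintype.card (Idx kk) : ℝ) ≤ ν * k := by
    rw [Fintype.card_sigma]
    push_cast
    simp only [Fintype.card_fin]
    refine (Finset.sum_le_sum fun j _ => hup j).trans ?_
    simp
  set N : ℝ := ((Fintype.card (Idx kk) : ℕ) : ℝ) with hN
  obtain ⟨hint, hmom⟩ := exp_moment B
    (fun x y => by rw [hBapp, hBapp]; exact Finset.sum_congr rfl fun m _ => by ring)
    (a / N) (by positivity) (by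
      intro t
      rw [hBq, Submodule.norm_coe t |>.symm, EuclideanSpace.norm_sq_eq, div_mul_eq_mul_div,
        div_le_iff₀ hN0, Finset.mul_sum]
      refine (Finset.sum_le_sum (g := fun _ => qform kk α t) fun p _ => ?_).trans ?_
      · simpa using hq t p
      · simp [hN, mul_comm])
  simp only [hBq] at hint hmom
  set I := ∫ t : Lsub kk hk, Real.exp (-(qform kk α (t : Spc kk))) with hI
  have hI0 : 0 ≤ I := integral_nonneg fun t => (Real.exp_pos _).le
  let l : Idx kk → (Lsub kk hk →ₗ[ℝ] ℝ) := fun p => (coordL kk p) ∘ₗ (Lsub kk hk).subtype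
  have hl : ∀ p (t : Lsub kk hk), l p t = (t : Spc kk) p := fun p t => rfl
  set X := {t : ↥(Lsub kk hk) | δ ≤ supNorm kk (t : Spc kk)} with hX
  have hle1 : ∫ t in X, Real.exp (-(qform kk α (t : Spc kk))) ≤ I :=
    setIntegral_le_integral hint (Filter.Eventually.of_forall fun t => (Real.exp_pos _).le)
  have hXm : MeasurableSet X := by
    apply measurableSet_le measurable_const
    apply Continuous.measurable
    unfold supNorm
    exact ((PiLp.continuous_ofLp 2 _).comp continuous_subtype_val).norm
  set s : ℝ := 2 * a * δ with hs
  have hs0 : 0 < s := by positivity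
  have hm1 := fun p => hmom (l p) a ha0 (fun t => hq t p) s
  have hm2 := fun p => hmom (l p) a ha0 (fun t => hq t p) (-s)
  let G : Lsub kk hk → ℝ := fun t => Real.exp (-(s * δ)) * ∑ p : Idx kk,
    (Real.exp (s * l p t - qform kk α t) + Real.exp (-s * l p t - qform kk α t))
  have hGint : Integrable G :=
    (integrable_finsetSum _ fun p _ => (hm1 p).1.add (hm2 p).1).const_mul _
  have hG0 : ∀ t, 0 ≤ G t := fun t => by positivity
  have hpt : ∀ t ∈ X, Real.exp (-(qform kk α (t : Spc kk))) ≤ G t := by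
    intro t ht
    have ht' : δ ≤ ‖(WithLp.equiv 2 (Idx kk → ℝ)) (t : Spc kk)‖ := ht
    have hex : ∃ p, δ ≤ |(t : Spc kk) p| := by
      by_contra! hcon
      exact absurd ht' (not_le.2 ((pi_norm_lt_iff hδ).2 fun p => hcon p))
    obtain ⟨p, hp⟩ := hex
    have h1 : Real.exp (-(qform kk α (t : Spc kk))) ≤ Real.exp (-(s * δ)) *
        (Real.exp (s * l p t - qform kk α t) + Real.exp (-s * l p t - qform kk α t)) := by
      rw [mul_add, ← Real.exp_add, ← Real.exp_add, hl]
      rcases le_abs.1 hp with h | h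
      · refine le_add_of_le_of_nonneg (Real.exp_le_exp.2 ?_) (Real.exp_pos _).le
        nlinarith
      · refine le_add_of_nonneg_of_le (Real.exp_pos _).le (Real.exp_le_exp.2 ?_)
        nlinarith
    refine h1.trans (mul_le_mul_of_nonneg_left ?_ (Real.exp_pos _).le)
    exact Finset.single_le_sum (f := fun p => Real.exp (s * l p t - qform kk α t) +
      Real.exp (-s * l p t - qform kk α t)) (fun p _ => by positivity) (Finset.mem_univ p)
  have hle2 : ∫ t in X, Real.exp (-(qform kk α (t : Spc kk))) ≤
      2 * (ν * k) * Real.exp (-(a * δ ^ 2)) * I := by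
    calc ∫ t in X, Real.exp (-(qform kk α (t : Spc kk)))
        ≤ ∫ t in X, G t := setIntegral_mono_on hint.integrableOn hGint.integrableOn hXm hpt
      _ ≤ ∫ t, G t := setIntegral_le_integral hGint (Filter.Eventually.of_forall hG0)
      _ = Real.exp (-(s * δ)) * ∑ p : Idx kk,
          ((∫ t, Real.exp (s * l p t - qform kk α t)) +
            ∫ t, Real.exp (-s * l p t - qform kk α t)) := by
          simp only [G]
          rw [integral_const_mul]
          congr 1
          refine (integral_finsetSum _ fun p _ => (hm1 p).1.add (hm2 p).1).trans ?_
          exact Finset.sum_congr rfl fun p _ => integral_add (hm1 p).1 (hm2 p).1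
      _ ≤ Real.exp (-(s * δ)) * ∑ p : Idx kk,
          (Real.exp (s ^ 2 / (4 * a)) * I + Real.exp (s ^ 2 / (4 * a)) * I) := by
          refine mul_le_mul_of_nonneg_left (Finset.sum_le_sum fun p _ => ?_) (Real.exp_pos _).le
          have := (hm2 p).2
          rw [neg_sq] at this
          exact add_le_add (hm1 p).2 this
      _ = 2 * N * (Real.exp (-(s * δ)) * Real.exp (s ^ 2 / (4 * a))) * I := by
          rw [Finset.sum_const, Finset.card_univ, nsmul_eq_mul, ← hN]
          ring
      _ = 2 * N * Real.exp (-(a * δ ^ 2)) * I := by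
          rw [← Real.exp_add]
          congr 3
          rw [hs]
          field_simp
          ring
      _ ≤ 2 * (ν * k) * Real.exp (-(a * δ ^ 2)) * I := by gcongr
  have hab := absorb (ν * k) (a * δ ^ 2) (by nlinarith)
  have hexp : δ ^ 2 * k ^ (ν - 1) / (2 / c) = a * δ ^ 2 / 2 := by
    rw [ha]; field_simp
  rw [hexp]
  refine le_trans ?_ (mul_le_mul_of_nonneg_right hab hI0)
  rcases min_choice 1 (2 * (ν * k) * Real.exp (-(a * δ ^ 2))) with h | h
  · rw [h, one_mul]; exact hle1
  · rw [h]; exact hle2
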